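/- Let x₀ < ⋯ < xₙ and x̂₀ = x₀ < x̂₁ < ⋯ < x̂_{n−1} < x̂ₙ = xₙ satisfy max_{0≤k≤n} Σ_{j≠k} |r_{jk}(x, x̂)| < 0.01 and max_k |x̂_k − x_k| ≤ 0.1·min_{j≠k} |x_j − x_k|. Let f : [x₀, xₙ] → ℝ be Lipschitz with constant L, set y_k := f(x̂_k), and let z_k = z_k(x, x̂). Then for all t ∈ [x₀, xₙ], |E(t; y, z)| ≤ L·ρ(x̂)·‖z‖₁ + Λ(x̂)·‖z‖_∞·‖f − P_y‖_∞, where ρ(x̂) := max_{0≤k≤n} sup_{t ∈ [x₀, xₙ]} |ℓ_k(t)·(t − x̂_k)|, ‖z‖₁ = Σ_k |z_k|, ‖z‖_∞ = max_k |z_k|, and ‖f − P_y‖_∞ = sup_{t ∈ [x₀, xₙ]} |f(t) − P_y(t)|. -/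

import Mathlib

/-!
Since `P_{yz}` and `P_z` are sums over the Lagrange basis, `E(t) = ∑ ℓ_k(t) z_k (y_k - P_y(t))`.
Splitting `y_k - P_y(t) = (f(x̂_k) - f(t)) + (f(t) - P_y(t))` gives two sums. In the first one the
Lipschitz bound turns `|ℓ_k(t)| |f(x̂_k) - f(t)|` into `L |ℓ_k(t) (t - x̂_k)| ≤ L ρ`; the second one
is `(f(t) - P_y(t)) P_z(t)` with `|P_z(t)| ≤ Λ ‖z‖_∞`. All suprema are of continuous functions
on a compact interval, hence genuine.
-/

/-- Barycentric weight `λ_k(x) = 1 / ∏_{j ≠ k} (x_k - x_j)`. -/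
noncomputable def lam {n : ℕ} (x : Fin (n + 1) → ℝ) (k : Fin (n + 1)) : ℝ :=
  (∏ j ∈ Finset.univ.erase k, (x k - x j))⁻¹

/-- Relative error in the weights `z_k(x, x̂)`. -/
noncomputable def zk {n : ℕ} (x xh : Fin (n + 1) → ℝ) (k : Fin (n + 1)) : ℝ :=
  (lam x k - lam xh k) / lam xh k

/-- Relative error in the node differences `r_{jk}(x, x̂)`. -/
noncomputable def rjk {n : ℕ} (x xh : Fin (n + 1) → ℝ) (j k : Fin (n + 1)) : ℝ :=
  (xh k - xh j) / (x k - x j) - 1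

/-- The Error Polynomial `E(t; y, z) = P_{yz}(t) - P_y(t)·P_z(t)` for nodes `xh`. -/
noncomputable def errP {n : ℕ} (xh y z : Fin (n + 1) → ℝ) (t : ℝ) : ℝ :=
  (Lagrange.interpolate Finset.univ xh (fun k => y k * z k)).eval t -
    (Lagrange.interpolate Finset.univ xh y).eval t *
      (Lagrange.interpolate Finset.univ xh z).eval t

/-- The Lebesgue constant of the node family `v` over the interval `[a, b]`. -/
noncomputable def leb {ι : Type*} [Fintype ι] [DecidableEq ι] (v : ι → ℝ) (a b : ℝ) : ℝ :=
  ⨆ t : Set.Icc a b, ∑ k, |(Lagrange.basis Finset.univ v k).eval (t : ℝ)|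

/-- A continuous function on a compact interval is dominated by its (real-valued) supremum. -/
lemma le_iSup_Icc_of_continuousOn {a b : ℝ} {g : ℝ → ℝ} (hg : ContinuousOn g (Set.Icc a b))
    {t : ℝ} (ht : t ∈ Set.Icc a b) : g t ≤ ⨆ s : Set.Icc a b, g s := by
  have hb : BddAbove (Set.range fun s : Set.Icc a b => g s) := by
    have h := isCompact_Icc.bddAbove_image hg
    rwa [Set.image_eq_range] at h
  exact le_ciSup hb ⟨t, ht⟩

lemma interpolate_eval {n : ℕ} (v w : Fin (n + 1) → ℝ) (t : ℝ) :
    (Lagrange.interpolate Finset.univ v w).eval t =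
      ∑ k, w k * (Lagrange.basis Finset.univ v k).eval t := by
  simp [Lagrange.interpolate_apply, Polynomial.eval_finsetSum]

/-- Splitting of the Error Polynomial around a reference value `c`; it uses no partition-of-unity
property because the terms in `c` cancel. -/
lemma errP_eq {n : ℕ} (xh y z : Fin (n + 1) → ℝ) (c t : ℝ) :
    errP xh y z t =
      ∑ k, (Lagrange.basis Finset.univ xh k).eval t * (y k - c) * z k +
        (∑ k, z k * (Lagrange.basis Finset.univ xh k).eval t) *
          (c - (Lagrange.interpolate Finset.univ xh y).eval t) := by
  unfold errP
  rw [interpolate_eval xh (fun k => y k * z k), interpolate_eval xh z]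
  have h : ∑ k, (Lagrange.basis Finset.univ xh k).eval t * (y k - c) * z k =
      ∑ k, y k * z k * (Lagrange.basis Finset.univ xh k).eval t -
        c * ∑ k, z k * (Lagrange.basis Finset.univ xh k).eval t := by
    rw [Finset.mul_sum, ← Finset.sum_sub_distrib]
    exact Finset.sum_congr rfl fun k _ => by ring
  rw [h]
  ring

theorem stmt_10 {n : ℕ} (x xh : Fin (n + 1) → ℝ)
    (hx : StrictMono x) (hxh : StrictMono xh)
    (h0 : xh 0 = x 0) (hn : xh (Fin.last n) = x (Fin.last n))
    (hδ : (Finset.univ.sup' Finset.univ_nonempty fun k =>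
      ∑ j ∈ Finset.univ.erase k, |rjk x xh j k|) < 0.01)
    (hclose : ∀ k j i : Fin (n + 1), j ≠ i → |xh k - x k| ≤ 0.1 * |x j - x i|)
    (f : ℝ → ℝ) (L : ℝ)
    (hf : ∀ s ∈ Set.Icc (x 0) (x (Fin.last n)), ∀ t ∈ Set.Icc (x 0) (x (Fin.last n)),
      |f s - f t| ≤ L * |s - t|)
    (y : Fin (n + 1) → ℝ) (hy : ∀ k, y k = f (xh k))
    (t : ℝ) (ht : t ∈ Set.Icc (x 0) (x (Fin.last n))) :
    |errP xh y (zk x xh) t| ≤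
      L * (Finset.univ.sup' Finset.univ_nonempty fun k =>
          ⨆ s : Set.Icc (x 0) (x (Fin.last n)),
            |(Lagrange.basis Finset.univ xh k).eval (s : ℝ) * ((s : ℝ) - xh k)|) *
        (∑ k, |zk x xh k|) +
      leb xh (x 0) (x (Fin.last n)) *
        (Finset.univ.sup' Finset.univ_nonempty fun k => |zk x xh k|) *
        (⨆ s : Set.Icc (x 0) (x (Fin.last n)),
          |f (s : ℝ) - (Lagrange.interpolate Finset.univ xh y).eval (s : ℝ)|) := by
  rcases Nat.eq_zero_or_pos n with rfl | hpos
  · -- With a single node `z = 0`; this case is separate because `L` may be negative here.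
    have hz : zk x xh = 0 := by
      funext k
      have hk : k = 0 := by lia
      subst hk
      simp [zk, lam]
    simp [hz, errP]
  have hlt : x 0 < x (Fin.last n) := hx (by simp [Fin.lt_def, hpos])
  have hL : 0 ≤ L := by
    have h := hf _ (Set.left_mem_Icc.2 hlt.le) _ (Set.right_mem_Icc.2 hlt.le)
    have h1 : 0 < |x 0 - x (Fin.last n)| := abs_pos.2 (sub_ne_zero.2 hlt.ne)
    exact nonneg_of_mul_nonneg_left ((abs_nonneg _).trans h) h1
  have hfc : ContinuousOn f (Set.Icc (x 0) (x (Fin.last n))) := by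
    refine (LipschitzOnWith.of_dist_le_mul (K := L.toNNReal) fun s hs u hu => ?_).continuousOn
    rw [Real.coe_toNNReal _ hL, Real.dist_eq, Real.dist_eq]
    exact hf s hs u hu
  have hmem : ∀ k, xh k ∈ Set.Icc (x 0) (x (Fin.last n)) := fun k =>
    ⟨h0 ▸ hxh.monotone (Fin.zero_le k), hn ▸ hxh.monotone (Fin.le_last k)⟩
  set ρ := Finset.univ.sup' Finset.univ_nonempty fun k =>
          ⨆ s : Set.Icc (x 0) (x (Fin.last n)),
            |(Lagrange.basis Finset.univ xh k).eval (s : ℝ) * ((s : ℝ) - xh k)| with hρ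
  set Z := Finset.univ.sup' Finset.univ_nonempty fun k => |zk x xh k| with hZ
  have hρk : ∀ k, |(Lagrange.basis Finset.univ xh k).eval t * (t - xh k)| ≤ ρ := fun k =>
    (le_iSup_Icc_of_continuousOn
      (g := fun s => |(Lagrange.basis Finset.univ xh k).eval s * (s - xh k)|)
      (by fun_prop) ht).trans
      (Finset.le_sup' (fun k => ⨆ s : Set.Icc (x 0) (x (Fin.last n)),
        |(Lagrange.basis Finset.univ xh k).eval (s : ℝ) * ((s : ℝ) - xh k)|) (Finset.mem_univ k))
  have hZk : ∀ k, |zk x xh k| ≤ Z := fun k =>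
    Finset.le_sup' (fun k => |zk x xh k|) (Finset.mem_univ k)
  have hZ0 : 0 ≤ Z := (abs_nonneg _).trans (hZk 0)
  have hleb : ∑ k, |(Lagrange.basis Finset.univ xh k).eval t| ≤ leb xh (x 0) (x (Fin.last n)) :=
    le_iSup_Icc_of_continuousOn
      (g := fun s => ∑ k, |(Lagrange.basis Finset.univ xh k).eval s|) (by fun_prop) ht
  have hF := le_iSup_Icc_of_continuousOn
    (g := fun s => |f s - (Lagrange.interpolate Finset.univ xh y).eval s|) (by fun_prop) ht
  rw [errP_eq xh y _ (f t) t]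
  refine (abs_add_le _ _).trans (add_le_add ?_ ?_)
  · rw [Finset.mul_sum]
    refine (Finset.abs_sum_le_sum_abs _ _).trans (Finset.sum_le_sum fun k _ => ?_)
    rw [abs_mul]
    refine mul_le_mul_of_nonneg_right ?_ (abs_nonneg _)
    calc |(Lagrange.basis Finset.univ xh k).eval t * (y k - f t)|
        ≤ |(Lagrange.basis Finset.univ xh k).eval t| * (L * |xh k - t|) := by
          rw [abs_mul, hy k]
          exact mul_le_mul_of_nonneg_left (hf _ (hmem k) _ ht) (abs_nonneg _)
      _ = L * |(Lagrange.basis Finset.univ xh k).eval t * (t - xh k)| := by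
          rw [abs_mul, abs_sub_comm (xh k) t]
          ring
      _ ≤ L * ρ := mul_le_mul_of_nonneg_left (hρk k) hL
  · have hPz : |∑ k, zk x xh k * (Lagrange.basis Finset.univ xh k).eval t| ≤
        leb xh (x 0) (x (Fin.last n)) * Z := by
      calc |∑ k, zk x xh k * (Lagrange.basis Finset.univ xh k).eval t|
          ≤ ∑ k, |(Lagrange.basis Finset.univ xh k).eval t| * Z := by
            refine (Finset.abs_sum_le_sum_abs _ _).trans (Finset.sum_le_sum fun k _ => ?_)
            rw [abs_mul, mul_comm]
            exact mul_le_mul_of_nonneg_left (hZk k) (abs_nonneg _)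
        _ = (∑ k, |(Lagrange.basis Finset.univ xh k).eval t|) * Z := by rw [Finset.sum_mul]
        _ ≤ _ := mul_le_mul_of_nonneg_right hleb hZ0
    rw [abs_mul]
    exact mul_le_mul hPz hF (abs_nonneg _) ((abs_nonneg _).trans hPz)
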